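/- Let n ≥ 2 and let p : {1,…,n} × {1,…,n} → ℝ satisfy p_ii = 0, p_ij = p_ji, p_ij ≥ 0, and Σ_{i≠j} p_ij = 1 (sums over ordered pairs of distinct indices). For X = (X_1,…,X_n) ∈ (ℝ^d)^n define w_ij = (1 + ‖X_i − X_j‖²)^{-1} for i ≠ j, Z = Σ_{k≠l} w_kl, and q_ij = w_ij/Z. Then, with the convention 0·log 0 = 0, the function X ↦ KL(X) = Σ_{i≠j} p_ij log(p_ij/q_ij) is differentiable, and for every index m its partial gradient with respect to X_m equals 4·( Σ_{j≠m} p_mj·q_mj·Z·(X_m − X_j) − Σ_{j≠m} q_mj²·Z·(X_m − X_j) ), i.e. 4 Σ_{j≠m} (p_mj − q_mj)·q_mj·Z·(X_m − X_j). -/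

import Mathlib

open Finset

/-- The t-SNE normalization term `Z(X) = Σ_{k≠l} (1 + ‖X k − X l‖²)⁻¹`. -/
noncomputable def tsneZ {d n : ℕ} (X : Fin n → EuclideanSpace ℝ (Fin d)) : ℝ :=
  ∑ k, ∑ l ∈ Finset.univ.erase k, (1 + ‖X k - X l‖ ^ 2)⁻¹

/-- The low-dimensional probability `q i j = (1 + ‖X i − X j‖²)⁻¹ / Z(X)`. -/
noncomputable def tsneQ {d n : ℕ} (X : Fin n → EuclideanSpace ℝ (Fin d)) (i j : Fin n) : ℝ :=
  (1 + ‖X i - X j‖ ^ 2)⁻¹ / tsneZ X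

/-!
Since `p` has total mass one, `KL = const + ∑ p i j * log (1 + ‖X i - X j‖²) + log Z`. Both the
attraction `∑ p i j * log (1 + ‖X i - X j‖²)` and `Z` are energies of symmetric pair potentials in
the squared distances. Moving only `X m` affects such an energy through the pairs `(m, j)` and
`(j, m)`; this doubling, together with `∇ ‖y - a‖² = 2 (y - a)`, produces the factor `4`.
-/

section Sum

variable {ι M : Type*} [DecidableEq ι] [AddCommMonoid M]

theorem sum_sum_erase_eq_add_sum_sum_erase_erase {s : Finset ι} {m : ι} (hm : m ∈ s)
    (F : ι → ι → M) :
    ∑ i ∈ s, ∑ j ∈ s.erase i, F i j =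
      ∑ j ∈ s.erase m, F m j + ∑ i ∈ s.erase m, F i m +
        ∑ i ∈ s.erase m, ∑ j ∈ (s.erase i).erase m, F i j := by
  have split_off_m : ∀ i ∈ s.erase m,
      F i m + ∑ j ∈ (s.erase i).erase m, F i j = ∑ j ∈ s.erase i, F i j := fun i hi =>
    add_sum_erase (s.erase i) (F i) (mem_erase.mpr ⟨(ne_of_mem_erase hi).symm, hm⟩)
  rw [← add_sum_erase s _ hm, ← sum_congr rfl split_off_m, sum_add_distrib, add_assoc]

end Sum

section Gradient

variable {E : Type*} [NormedAddCommGroup E] [InnerProductSpace ℝ E] [CompleteSpace E]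

theorem hasGradientAt_comp_of_hasDerivAt {f : ℝ → ℝ} {f' : ℝ} {g : E → ℝ} {g' x : E}
    (hf : HasDerivAt f f' (g x)) (hg : HasGradientAt g g' x) :
    HasGradientAt (fun y => f (g y)) (f' • g') x :=
  (hf.comp_hasFDerivAt x hg.hasFDerivAt).congr_fderiv (by simp)

theorem hasGradientAt_norm_sub_sq (a x : E) :
    HasGradientAt (fun y => ‖y - a‖ ^ 2) ((2 : ℝ) • (x - a)) x :=
  ((hasFDerivAt_id x).sub_const a).norm_sq.congr_fderiv <| by
    ext v
    simp

end Gradient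

section PairEnergy

variable {ι E : Type*} [Fintype ι] [DecidableEq ι] [NormedAddCommGroup E]

/-- The energy `∑_{i ≠ j} φ i j (‖X i - X j‖²)` of a configuration `X` of points under pair
potentials `φ i j`, which are functions of the squared distance. The sum runs over ordered pairs,
so each unordered pair contributes twice. -/
def pairEnergy (φ : ι → ι → ℝ → ℝ) (X : ι → E) : ℝ :=
  ∑ i, ∑ j ∈ univ.erase i, φ i j (‖X i - X j‖ ^ 2)

theorem pairEnergy_update {φ : ι → ι → ℝ → ℝ} (hφ : ∀ i j, φ i j = φ j i) (X : ι → E) (m : ι)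
    (y : E) :
    pairEnergy φ (Function.update X m y) =
      2 * ∑ j ∈ univ.erase m, φ m j (‖y - X j‖ ^ 2) +
        ∑ i ∈ univ.erase m, ∑ j ∈ (univ.erase i).erase m, φ i j (‖X i - X j‖ ^ 2) := by
  rw [pairEnergy, sum_sum_erase_eq_add_sum_sum_erase_erase (mem_univ m), two_mul]
  congr 1
  · congr 1 <;> refine sum_congr rfl fun j hj => ?_
    · simp [ne_of_mem_erase hj]
    · simp [ne_of_mem_erase hj, hφ j m, norm_sub_rev]
  · refine sum_congr rfl fun i hi => sum_congr rfl fun j hj => ?_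
    simp [ne_of_mem_erase hi, ne_of_mem_erase hj]

variable [InnerProductSpace ℝ E]

theorem differentiable_pairEnergy {φ : ι → ι → ℝ → ℝ}
    (hφ : ∀ i j t, 0 ≤ t → DifferentiableAt ℝ (φ i j) t) :
    Differentiable ℝ (pairEnergy φ : (ι → E) → ℝ) := by
  intro X
  refine DifferentiableAt.fun_sum fun i _ => DifferentiableAt.fun_sum fun j _ => ?_
  exact (hφ i j _ (sq_nonneg _)).comp X
    (((differentiableAt_apply i X).sub (differentiableAt_apply j X)).norm_sq ℝ)

theorem hasGradientAt_pairEnergy_update [CompleteSpace E] {φ : ι → ι → ℝ → ℝ}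
    (hφ : ∀ i j, φ i j = φ j i) {X : ι → E} {m : ι} {φ' : ι → ℝ}
    (hφ' : ∀ j ≠ m, HasDerivAt (φ m j) (φ' j) (‖X m - X j‖ ^ 2)) :
    HasGradientAt (fun y => pairEnergy φ (Function.update X m y))
      ((4 : ℝ) • ∑ j ∈ univ.erase m, φ' j • (X m - X j)) (X m) := by
  simp only [pairEnergy_update hφ]
  have hasGradientAt_term : ∀ j ∈ univ.erase m,
      HasGradientAt (fun y => φ m j (‖y - X j‖ ^ 2)) (φ' j • (2 : ℝ) • (X m - X j)) (X m) :=
    fun j hj => hasGradientAt_comp_of_hasDerivAt (hφ' j (ne_of_mem_erase hj))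
      (hasGradientAt_norm_sub_sq (X j) (X m))
  have hasFDerivAt_sum :=
    HasFDerivAt.fun_sum fun j hj => (hasGradientAt_term j hj).hasFDerivAt
  refine ((hasFDerivAt_sum.const_mul 2).add_const _).congr_fderiv ?_
  simp only [smul_sum, map_sum, map_smul, smul_smul]
  exact sum_congr rfl fun j _ => by congr 1; ring

end PairEnergy

section StudentKernel

variable {ι E : Type*} [Fintype ι] [DecidableEq ι] [NormedAddCommGroup E]

/-- The normalization `Z` of the Student-t kernel of a finite family of points in a normed
space. -/
noncomputable def studentZ (X : ι → E) : ℝ :=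
  pairEnergy (fun _ _ t => (1 + t)⁻¹) X

/-- The normalized Student-t similarity `q i j` of two points of a finite family in a normed
space. As for `tsneQ`, the diagonal values are not set to zero. -/
noncomputable def studentQ (X : ι → E) (i j : ι) : ℝ :=
  (1 + ‖X i - X j‖ ^ 2)⁻¹ / studentZ X

/-- The t-SNE objective: the Kullback–Leibler divergence `KL(p ‖ studentQ X)` over ordered
pairs of distinct indices. Terms with `p i j = 0` vanish, as in the convention `0 log 0 = 0`. -/
noncomputable def studentKL (p : ι → ι → ℝ) (X : ι → E) : ℝ :=
  ∑ i, ∑ j ∈ univ.erase i, p i j * Real.log (p i j / studentQ X i j)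

theorem studentZ_pos [Nontrivial ι] (X : ι → E) : 0 < studentZ X :=
  sum_pos (fun i _ => sum_pos (fun j _ => by positivity) (univ_nontrivial.erase_nonempty))
    univ_nonempty

theorem studentKL_eq_add_pairEnergy_add_log [Nontrivial ι] {p : ι → ι → ℝ}
    (hnonneg : ∀ i j, 0 ≤ p i j) (hsum : ∑ i, ∑ j ∈ univ.erase i, p i j = 1) (X : ι → E) :
    studentKL p X =
      ∑ i, ∑ j ∈ univ.erase i, p i j * Real.log (p i j) +
        pairEnergy (fun i j t => p i j * Real.log (1 + t)) X + Real.log (studentZ X) := by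
  have hZ := studentZ_pos X
  have mul_log_div_studentQ (i j : ι) : p i j * Real.log (p i j / studentQ X i j) =
      p i j * Real.log (p i j) + p i j * Real.log (1 + ‖X i - X j‖ ^ 2) +
        p i j * Real.log (studentZ X) := by
    obtain hp | hp := (hnonneg i j).eq_or_lt
    · simp [← hp]
    · rw [studentQ, Real.log_div hp.ne' (by positivity), Real.log_div (by positivity) hZ.ne',
        Real.log_inv]
      ring
  simp only [studentKL, mul_log_div_studentQ, sum_add_distrib, ← sum_mul, hsum, one_mul, pairEnergy]

variable [InnerProductSpace ℝ E]

theorem differentiable_studentZ : Differentiable ℝ (studentZ : (ι → E) → ℝ) :=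
  differentiable_pairEnergy fun _ _ t ht =>
    (differentiableAt_id.const_add 1).fun_inv (by dsimp; positivity)

theorem differentiable_studentKL [Nontrivial ι] {p : ι → ι → ℝ} (hnonneg : ∀ i j, 0 ≤ p i j)
    (hsum : ∑ i, ∑ j ∈ univ.erase i, p i j = 1) :
    Differentiable ℝ (studentKL p : (ι → E) → ℝ) := by
  have differentiable_pairEnergy_log :
      Differentiable ℝ (pairEnergy (fun i j t => p i j * Real.log (1 + t)) : (ι → E) → ℝ) :=
    differentiable_pairEnergy fun i j t ht =>
      ((differentiableAt_id.const_add 1).log (by dsimp; positivity)).const_mul (p i j)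
  rw [funext (studentKL_eq_add_pairEnergy_add_log hnonneg hsum)]
  exact (differentiable_pairEnergy_log.const_add _).add
    (differentiable_studentZ.log fun X => (studentZ_pos X).ne')

variable [CompleteSpace E]

theorem hasGradientAt_studentZ_update (X : ι → E) (m : ι) :
    HasGradientAt (fun y => studentZ (Function.update X m y))
      ((4 : ℝ) • ∑ j ∈ univ.erase m, (-((1 + ‖X m - X j‖ ^ 2) ^ 2)⁻¹) • (X m - X j)) (X m) := by
  refine hasGradientAt_pairEnergy_update (fun _ _ => rfl) fun j _ => ?_
  simpa [neg_div] using ((hasDerivAt_id (‖X m - X j‖ ^ 2)).const_add 1).fun_inv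
    (by dsimp; positivity)

theorem hasGradientAt_pairEnergy_log_update {p : ι → ι → ℝ} (hsymm : ∀ i j, p i j = p j i)
    (X : ι → E) (m : ι) :
    HasGradientAt
      (fun y => pairEnergy (fun i j t => p i j * Real.log (1 + t)) (Function.update X m y))
      ((4 : ℝ) • ∑ j ∈ univ.erase m, (p m j * (1 + ‖X m - X j‖ ^ 2)⁻¹) • (X m - X j)) (X m) := by
  refine hasGradientAt_pairEnergy_update (fun i j => by simp only [hsymm i j]) fun j _ => ?_
  simpa using (((hasDerivAt_id (‖X m - X j‖ ^ 2)).const_add 1).log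
    (by dsimp; positivity)).const_mul (p m j)

theorem hasGradientAt_studentKL_update [Nontrivial ι] {p : ι → ι → ℝ}
    (hsymm : ∀ i j, p i j = p j i) (hnonneg : ∀ i j, 0 ≤ p i j)
    (hsum : ∑ i, ∑ j ∈ univ.erase i, p i j = 1) (X : ι → E) (m : ι) :
    HasGradientAt (fun y => studentKL p (Function.update X m y))
      ((4 : ℝ) •
        ((∑ j ∈ univ.erase m, (p m j * studentQ X m j * studentZ X) • (X m - X j))
          - ∑ j ∈ univ.erase m, ((studentQ X m j) ^ 2 * studentZ X) • (X m - X j))) (X m) := by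
  have hZ : studentZ X ≠ 0 := (studentZ_pos X).ne'
  have hasGradientAt_logZ : HasGradientAt
      (fun y => Real.log (studentZ (Function.update X m y))) _ (X m) :=
    hasGradientAt_comp_of_hasDerivAt
      (Real.hasDerivAt_log (by rwa [Function.update_eq_self])) (hasGradientAt_studentZ_update X m)
  simp only [studentKL_eq_add_pairEnergy_add_log hnonneg hsum]
  refine (((hasGradientAt_pairEnergy_log_update hsymm X m).hasFDerivAt.const_add _).add
    hasGradientAt_logZ.hasFDerivAt).congr_fderiv ?_
  rw [Function.update_eq_self, ← map_add, smul_comm, ← smul_add, sub_eq_add_neg, smul_sum,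
    ← sum_neg_distrib]
  congr 3 <;> refine sum_congr rfl fun j _ => ?_
  · congr 1
    rw [studentQ]
    field_simp
  · rw [smul_smul, ← neg_smul, studentQ]
    congr 1
    field_simp

end StudentKernel

theorem stmt_6_general {ι E : Type*} [Fintype ι] [DecidableEq ι] [Nontrivial ι]
    [NormedAddCommGroup E] [InnerProductSpace ℝ E] [CompleteSpace E] {p : ι → ι → ℝ}
    (hsymm : ∀ i j, p i j = p j i) (hnonneg : ∀ i j, 0 ≤ p i j)
    (hsum : ∑ i, ∑ j ∈ univ.erase i, p i j = 1) :
    Differentiable ℝ (studentKL p : (ι → E) → ℝ) ∧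
    ∀ (X : ι → E) (m : ι),
      gradient (fun y => studentKL p (Function.update X m y)) (X m)
        = (4 : ℝ) •
            ((∑ j ∈ univ.erase m, (p m j * studentQ X m j * studentZ X) • (X m - X j))
              - ∑ j ∈ univ.erase m, ((studentQ X m j) ^ 2 * studentZ X) • (X m - X j)) ∧
      gradient (fun y => studentKL p (Function.update X m y)) (X m)
        = (4 : ℝ) •
            ∑ j ∈ univ.erase m,
              ((p m j - studentQ X m j) * studentQ X m j * studentZ X) • (X m - X j) := by
  refine ⟨differentiable_studentKL hnonneg hsum, fun X m => ?_⟩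
  have gradient_eq := (hasGradientAt_studentKL_update hsymm hnonneg hsum X m).gradient
  refine ⟨gradient_eq, gradient_eq.trans ?_⟩
  simp only [sub_mul, sub_smul, sum_sub_distrib, sq]

/-- For `n ≥ 2` and a fixed symmetric probability distribution `p` on ordered
pairs of distinct indices with zero diagonal, the Kullback–Leibler divergence
`KL(X) = Σ_{i≠j} p i j · log (p i j / q i j)` (with `q i j = w i j / Z`,
`w i j = (1 + ‖X i − X j‖²)⁻¹`, `Z = Σ_{k≠l} w k l`, and the convention `0·log 0 = 0`) is a
differentiable function of `X ∈ (ℝ^d)^n`, and for every index `m` its partial gradient with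
respect to `X m` equals
`4·(Σ_{j≠m} p m j · q m j · Z · (X m − X j) − Σ_{j≠m} (q m j)² · Z · (X m − X j))`, i.e.
`4 Σ_{j≠m} (p m j − q m j) · q m j · Z · (X m − X j)`. -/
theorem stmt_6 {d n : ℕ} (hn : 2 ≤ n) (p : Fin n → Fin n → ℝ)
    (hdiag : ∀ i, p i i = 0) (hsymm : ∀ i j, p i j = p j i)
    (hnonneg : ∀ i j, 0 ≤ p i j)
    (hsum : ∑ i, ∑ j ∈ univ.erase i, p i j = 1)
    (KL : (Fin n → EuclideanSpace ℝ (Fin d)) → ℝ)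
    (hKL : ∀ Y : Fin n → EuclideanSpace ℝ (Fin d),
      KL Y = ∑ i, ∑ j ∈ univ.erase i, p i j * Real.log (p i j / tsneQ Y i j)) :
    Differentiable ℝ KL ∧
    ∀ (X : Fin n → EuclideanSpace ℝ (Fin d)) (m : Fin n),
      gradient (fun y : EuclideanSpace ℝ (Fin d) => KL (Function.update X m y)) (X m)
        = (4 : ℝ) •
            ((∑ j ∈ univ.erase m, (p m j * tsneQ X m j * tsneZ X) • (X m - X j))
              - ∑ j ∈ univ.erase m, ((tsneQ X m j) ^ 2 * tsneZ X) • (X m - X j)) ∧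
      gradient (fun y : EuclideanSpace ℝ (Fin d) => KL (Function.update X m y)) (X m)
        = (4 : ℝ) •
            ∑ j ∈ univ.erase m,
              ((p m j - tsneQ X m j) * tsneQ X m j * tsneZ X) • (X m - X j) := by
  have : Nontrivial (Fin n) := Fin.nontrivial_iff_two_le.mpr hn
  obtain rfl : KL = studentKL p := funext hKL
  exact stmt_6_general hsymm hnonneg hsum
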